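/- arXiv:2302.00993 — 2 statements merged into one kernel-verified Lean document; each statement's English description precedes it below -/
import Mathlib

section
/- Let m ≥ 2 and fix pairwise disjoint finite observed index sets V_1,…,V_m with union V. For r ∈ {1,2}, let (B^r, P^r) be a linear multi-domain representation over latent index data H^r = L^r ∪ I_1^r ∪ ⋯ ∪ I_m^r (with S_e^r = L^r ∪ I_e^r), i.e. B^r = G^r (I − A^r)^{-1} with G^r_{v,k} = 0 whenever v ∈ V_e and k ∉ S_e^r, I − A^r invertible, A^r_{L^r, H^r∖L^r} = 0, A^r_{H^r∖L^r, L^r} = 0, A^r_{I_e^r, I_f^r} = 0 for e ≠ f, and P^r = ⊗_{i∈H^r} P_i^r a product probability measure on ℝ^{H^r}. Assume for each r: every marginal P_i^r has mean zero and unit variance, is non-symmetric (P_i^r ≠ (−1)#P_i^r), and the marginals are pairwise different up to sign (P_i^r ≠ P_j^r and P_i^r ≠ (−1)#P_j^r for i ≠ j); assume moreover that for every domain e the matrix B^r_{V_e, S_e^r} has full column rank. If for every e ∈ {1,…,m} the domain-e marginals agree, i.e. B^1_{V_e,·}#P^1 = B^2_{V_e,·}#P^2 as measures on ℝ^{V_e},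 then |L^1| = |L^2| and |I_e^1| = |I_e^2| for all e (hence |H^1| = |H^2|), and, after identifying the index sets block-wise in order, there exists a block signed permutation matrix Ψ = diag(Ψ_L, Ψ_{I_1}, …, Ψ_{I_m}), with Ψ_L a signed permutation of L and each Ψ_{I_e} a signed permutation of I_e, such that B^2 = B^1 Ψ and P^2 = Ψ^T # P^1; in particular the joint distributions coincide: B^1 # P^1 = B^2 # P^2. -/
open MeasureTheory

lemma norm_prod_sub_prod_le_sum {ι : Type*} (s : Finset ι) (a b : ι → ℂ)
    (ha : ∀ i, ‖a i‖ ≤ 1) (hb : ∀ i, ‖b i‖ ≤ 1) :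
    ‖∏ i ∈ s, a i - ∏ i ∈ s, b i‖ ≤ ∑ i ∈ s, ‖a i - b i‖ := by
  classical
  induction s using Finset.induction_on with
  | empty => simp
  | insert k s hk ih =>
    rw [Finset.prod_insert hk, Finset.prod_insert hk, Finset.sum_insert hk]
    have hb' : ‖∏ i ∈ s, b i‖ ≤ 1 := by
      rw [norm_prod]
      exact Finset.prod_le_one (fun _ _ => norm_nonneg _) fun i _ => hb i
    calc ‖a k * ∏ i ∈ s, a i - b k * ∏ i ∈ s, b i‖
        = ‖a k * (∏ i ∈ s, a i - ∏ i ∈ s, b i) + (a k - b k) * ∏ i ∈ s, b i‖ := by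
          congr 1; ring
      _ ≤ ‖a k‖ * ‖∏ i ∈ s, a i - ∏ i ∈ s, b i‖ + ‖a k - b k‖ * ‖∏ i ∈ s, b i‖ := by
          rw [← norm_mul, ← norm_mul]
          exact norm_add_le _ _
      _ ≤ 1 * ‖∏ i ∈ s, a i - ∏ i ∈ s, b i‖ + ‖a k - b k‖ * 1 := by
          gcongr
          exact ha k
      _ ≤ ‖a k - b k‖ + ∑ i ∈ s, ‖a i - b i‖ := by linarith

lemma measure_eq_map_neg_of_charFun_even (μ : Measure ℝ) [IsProbabilityMeasure μ]
    (h : ∀ u, charFun μ u = charFun μ (-u)) : μ = Measure.map (fun t : ℝ => -t) μ := by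
  have : IsProbabilityMeasure (Measure.map (fun t : ℝ => -t) μ) :=
    Measure.isProbabilityMeasure_map (by fun_prop)
  refine Measure.ext_of_charFun (funext fun t => ?_)
  have := charFun_map_mul (μ := μ) (-1) t
  simp only [neg_one_mul] at this
  rw [this, h]

/-- The odd part of the characteristic function of a standardized law is `o(u ^ 2)` at zero. -/
lemma exists_charFun_sub_charFun_neg_le (μ : Measure ℝ) [IsProbabilityMeasure μ]
    (hmean : ∫ x, x ∂μ = 0) (hvar : ∫ x, x ^ 2 ∂μ = 1) {η : ℝ} (hη : 0 < η) :
    ∃ δ > 0, ∀ u : ℝ, |u| ≤ δ → ‖charFun μ u - charFun μ (-u)‖ ≤ η * u ^ 2 := by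
  have hT := taylor_charFun_two (X := id) (P := μ) aemeasurable_id (by simpa using hmean)
    (by simpa using hvar)
  rw [Measure.map_id] at hT
  have hev := hT.def (half_pos hη)
  obtain ⟨r, hr, hball⟩ := Metric.eventually_nhds_iff.1 hev
  refine ⟨r / 2, half_pos hr, fun u hu => ?_⟩
  have h1 := hball (y := u) (by rw [Real.dist_eq, sub_zero]; linarith)
  have h2 := hball (y := -u) (by rw [Real.dist_eq, sub_zero, abs_neg]; linarith)
  simp only [norm_pow, Real.norm_eq_abs, sq_abs, abs_neg] at h1 h2
  calc ‖charFun μ u - charFun μ (-u)‖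
      = ‖(charFun μ u - (1 - (u : ℂ) ^ 2 / 2))
          - (charFun μ (-u) - (1 - ((-u : ℝ) : ℂ) ^ 2 / 2))‖ := by
        congr 1; push_cast; ring
    _ ≤ _ := norm_sub_le _ _
    _ ≤ η * u ^ 2 := by linarith

lemma exists_uniform_charFun_sub_charFun_neg_le {S : Type*} [Finite S] (ν : S → Measure ℝ)
    [∀ i, IsProbabilityMeasure (ν i)] (hmean : ∀ i, ∫ x, x ∂(ν i) = 0)
    (hvar : ∀ i, ∫ x, x ^ 2 ∂(ν i) = 1) {η : ℝ} (hη : 0 < η) :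
    ∃ δ > 0, ∀ i, ∀ u : ℝ, |u| ≤ δ →
      ‖charFun (ν i) u - charFun (ν i) (-u)‖ ≤ η * u ^ 2 := by
  choose δ hδ h using fun i => exists_charFun_sub_charFun_neg_le (ν i) (hmean i) (hvar i) hη
  cases isEmpty_or_nonempty S
  · exact ⟨1, one_pos, fun i => isEmptyElim i⟩
  · obtain ⟨i₀, hi₀⟩ := Finite.exists_min δ
    exact ⟨δ i₀, hδ i₀, fun i u hu => h i u (hu.trans (hi₀ i))⟩

/-- A quadratic bound on the odd part of characteristic functions on `[-r, r]` extends to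
`[-r / c, r / c]` for a unit combination of the variables with coefficients at most `c`. -/
lemma charFun_sub_charFun_neg_le_of_prod {S : Type*} [Fintype S] (ν : S → Measure ℝ)
    [∀ j, IsProbabilityMeasure (ν j)] (μ : Measure ℝ) (w : S → ℝ)
    (hw : ∑ j, w j ^ 2 = 1) (hμ : ∀ u, charFun μ u = ∏ j, charFun (ν j) (w j * u))
    {η c r : ℝ} (hc : ∀ j, |w j| ≤ c)
    (h : ∀ j, w j ≠ 0 → ∀ u : ℝ, |u| ≤ r →
      ‖charFun (ν j) u - charFun (ν j) (-u)‖ ≤ η * u ^ 2)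
    (u : ℝ) (hu : c * |u| ≤ r) :
    ‖charFun μ u - charFun μ (-u)‖ ≤ η * u ^ 2 := by
  rw [hμ, hμ]
  refine (norm_prod_sub_prod_le_sum _ _ _ (fun j => norm_charFun_le_one _)
    fun j => norm_charFun_le_one _).trans ?_
  calc ∑ j, ‖charFun (ν j) (w j * u) - charFun (ν j) (w j * -u)‖
      ≤ ∑ j, η * (w j * u) ^ 2 := by
        refine Finset.sum_le_sum fun j _ => ?_
        rcases eq_or_ne (w j) 0 with h0 | h0
        · simp [h0]
        · rw [mul_neg]
          refine h j h0 _ ?_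
          rw [abs_mul]
          exact (mul_le_mul_of_nonneg_right (hc j) (abs_nonneg u)).trans hu
    _ = η * (∑ j, w j ^ 2) * u ^ 2 := by
        rw [Finset.mul_sum, Finset.sum_mul]
        exact Finset.sum_congr rfl fun j _ => by ring
    _ = η * u ^ 2 := by rw [hw, mul_one]

lemma eq_zero_of_sum_sq_eq_one {S : Type*} [Fintype S] {w : S → ℝ} (hw : ∑ j, w j ^ 2 = 1)
    {j k : S} (hj : |w j| = 1) (hk : k ≠ j) : w k = 0 := by
  classical
  have hsplit := Finset.add_sum_erase Finset.univ (fun j => w j ^ 2) (Finset.mem_univ j)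
  have hsq : w j ^ 2 = 1 := by rw [← sq_abs, hj, one_pow]
  have hle := Finset.single_le_sum (f := fun j => w j ^ 2) (fun i _ => sq_nonneg (w i))
    (Finset.mem_erase.2 ⟨hk, Finset.mem_univ k⟩)
  have : w k ^ 2 ≤ 0 := by linarith
  exact pow_eq_zero_iff two_ne_zero |>.1 (le_antisymm this (sq_nonneg _))

/-- If an orthogonal map sends a standardized product law to a standardized product law and no
factor is symmetric, each column of the map contains an entry of absolute value one. -/
lemma exists_abs_eq_one_of_prod_charFun {S1 S2 : Type*} [Fintype S1] [Fintype S2]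
    [DecidableEq S1] [DecidableEq S2]
    (U : Matrix S2 S1 ℝ) (hU : U.transpose * U = 1) (hU' : U * U.transpose = 1)
    (ν1 : S1 → Measure ℝ) (ν2 : S2 → Measure ℝ)
    [∀ i, IsProbabilityMeasure (ν1 i)] [∀ i, IsProbabilityMeasure (ν2 i)]
    (hmean1 : ∀ i, ∫ x, x ∂(ν1 i) = 0) (hvar1 : ∀ i, ∫ x, x ^ 2 ∂(ν1 i) = 1)
    (hnonsym1 : ∀ i, ν1 i ≠ Measure.map (fun t : ℝ => -t) (ν1 i))
    (hmean2 : ∀ i, ∫ x, x ∂(ν2 i) = 0) (hvar2 : ∀ i, ∫ x, x ^ 2 ∂(ν2 i) = 1)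
    (hcol : ∀ i u, charFun (ν1 i) u = ∏ j, charFun (ν2 j) (U j i * u))
    (hrow : ∀ j u, charFun (ν2 j) u = ∏ i, charFun (ν1 i) (U j i * u)) (i₀ : S1) :
    ∃ j, |U j i₀| = 1 := by
  by_contra! hbad
  have hcs : ∀ i, ∑ j, U j i ^ 2 = 1 := fun i => by
    simpa [Matrix.mul_apply, sq] using congrFun (congrFun hU i) i
  have hrs : ∀ j, ∑ i, U j i ^ 2 = 1 := fun j => by
    simpa [Matrix.mul_apply, sq] using congrFun (congrFun hU' j) j
  have hle : ∀ j i, |U j i| ≤ 1 := fun j i => by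
    rw [← sq_le_one_iff_abs_le_one, ← hcs i]
    exact Finset.single_le_sum (f := fun j => U j i ^ 2) (fun _ _ => sq_nonneg _)
      (Finset.mem_univ j)
  obtain ⟨c, hc0, hc1, hc⟩ : ∃ c : ℝ, 0 < c ∧ c < 1 ∧ ∀ j i, |U j i| ≠ 1 → |U j i| ≤ c := by
    let f : S2 × S1 → ℝ := fun p => if |U p.1 p.2| = 1 then 1 / 2 else max (1 / 2) |U p.1 p.2|
    have hne : Nonempty (S2 × S1) := by
      by_contra hemp
      have : IsEmpty S2 := ⟨fun j => hemp ⟨(j, i₀)⟩⟩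
      simpa using hcs i₀
    obtain ⟨p, hp⟩ := Finite.exists_max f
    have hf : ∀ q, 0 < f q ∧ f q < 1 := fun q => by
      dsimp only [f]
      split_ifs with h
      · norm_num
      · exact ⟨lt_max_of_lt_left (by norm_num),
          max_lt (by norm_num) (lt_of_le_of_ne (hle _ _) h)⟩
    refine ⟨f p, (hf p).1, (hf p).2, fun j i h => ?_⟩
    refine le_trans ?_ (hp (j, i))
    simp [f, h]
  have hprop : ∀ j i, U j i ≠ 0 → ((∀ j', |U j' i| ≠ 1) ↔ ∀ i', |U j i'| ≠ 1) := by
    intro j i h0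
    constructor
    · intro h i' hi'
      by_cases hii : i = i'
      · exact h j (hii ▸ hi')
      · exact h0 (eq_zero_of_sum_sq_eq_one (hrs j) hi' hii)
    · intro h j' hj'
      by_cases hjj : j = j'
      · exact h i (hjj ▸ hj')
      · exact h0 (eq_zero_of_sum_sq_eq_one (hcs i) hj' hjj)
  have key : ∀ η > 0, ∀ u, ‖charFun (ν1 i₀) u - charFun (ν1 i₀) (-u)‖ ≤ η * u ^ 2 := by
    intro η hη u
    obtain ⟨δ1, hδ1, h1⟩ := exists_uniform_charFun_sub_charFun_neg_le ν1 hmean1 hvar1 hη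
    obtain ⟨δ2, hδ2, h2⟩ := exists_uniform_charFun_sub_charFun_neg_le ν2 hmean2 hvar2 hη
    have hind : ∀ n : ℕ,
        (∀ i, (∀ j, |U j i| ≠ 1) → ∀ u : ℝ, |u| ≤ min δ1 δ2 / c ^ n →
          ‖charFun (ν1 i) u - charFun (ν1 i) (-u)‖ ≤ η * u ^ 2) ∧
        (∀ j, (∀ i, |U j i| ≠ 1) → ∀ u : ℝ, |u| ≤ min δ1 δ2 / c ^ n →
          ‖charFun (ν2 j) u - charFun (ν2 j) (-u)‖ ≤ η * u ^ 2) := by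
      intro n
      induction n with
      | zero =>
        simp only [pow_zero, div_one]
        exact ⟨fun i _ u hu => h1 i u (hu.trans (min_le_left _ _)),
          fun j _ u hu => h2 j u (hu.trans (min_le_right _ _))⟩
      | succ n ih =>
        have hscale : ∀ u : ℝ, |u| ≤ min δ1 δ2 / c ^ (n + 1) → c * |u| ≤ min δ1 δ2 / c ^ n := by
          intro u hu
          calc c * |u| ≤ c * (min δ1 δ2 / c ^ (n + 1)) := by gcongr
            _ = min δ1 δ2 / c ^ n := by rw [pow_succ]; field_simp
        refine ⟨fun i hi u hu => ?_, fun j hj u hu => ?_⟩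
        · exact charFun_sub_charFun_neg_le_of_prod ν2 (ν1 i) (fun j => U j i) (hcs i) (hcol i)
            (fun j => hc j i (hi j)) (fun j h0 => ih.2 j ((hprop j i h0).1 hi)) u (hscale u hu)
        · exact charFun_sub_charFun_neg_le_of_prod ν1 (ν2 j) (fun i => U j i) (hrs j) (hrow j)
            (fun i => hc j i (hj i)) (fun i h0 => ih.1 i ((hprop j i h0).2 hj)) u (hscale u hu)
    have hδ : 0 < min δ1 δ2 := lt_min hδ1 hδ2
    obtain ⟨n, hn⟩ := exists_pow_lt_of_lt_one (show 0 < min δ1 δ2 / (|u| + 1) by positivity) hc1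
    refine (hind n).1 i₀ hbad u ?_
    rw [lt_div_iff₀ (by positivity)] at hn
    rw [le_div_iff₀ (by positivity)]
    nlinarith [pow_pos hc0 n]
  refine hnonsym1 i₀ (measure_eq_map_neg_of_charFun_even _ fun u => ?_)
  rw [← sub_eq_zero, ← norm_le_zero_iff]
  refine le_of_forall_pos_le_add fun η hη => ?_
  have := key (η / (u ^ 2 + 1)) (by positivity) u
  refine this.trans ?_
  rw [zero_add, div_mul_eq_mul_div, div_le_iff₀ (by positivity)]
  nlinarith

lemma integral_exp_sum_pi {H : Type*} [Fintype H] (μ : H → Measure ℝ)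
    [∀ i, IsProbabilityMeasure (μ i)] (c : H → ℝ) :
    ∫ x, Complex.exp (((∑ k, c k * x k : ℝ) : ℂ) * Complex.I) ∂(Measure.pi μ)
      = ∏ k, charFun (μ k) (c k) := by
  simp_rw [charFun_apply_real]
  rw [← integral_fintype_prod_eq_prod
    (f := fun k (x : ℝ) => Complex.exp ((c k : ℂ) * x * Complex.I))]
  congr with x
  rw [← Complex.exp_sum, Complex.ofReal_sum, Finset.sum_mul]
  simp

lemma integral_sq_sum_pi {H : Type*} [Fintype H] (μ : H → Measure ℝ)
    [∀ i, IsProbabilityMeasure (μ i)] (hmean : ∀ i, ∫ x, x ∂(μ i) = 0)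
    (hvar : ∀ i, ∫ x, x ^ 2 ∂(μ i) = 1) (c : H → ℝ) :
    ∫ x, (∑ k, c k * x k) ^ 2 ∂(Measure.pi μ) = ∑ k, c k ^ 2 := by
  have hL : ∀ k, MemLp (fun x : ℝ => c k * x) 2 (μ k) := fun k => by
    refine MemLp.const_mul (f := fun x : ℝ => x) ?_ _
    refine (memLp_two_iff_integrable_sq (by fun_prop)).2 (.of_integral_ne_zero ?_)
    simp [hvar]
  have hv := ProbabilityTheory.variance_sum_pi (μ := μ) hL
  have h0 : ∫ x, (∑ k, fun ω : H → ℝ => c k * ω k) x ∂(Measure.pi μ) = 0 := by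
    simp only [Finset.sum_apply]
    rw [integral_finsetSum _ fun k _ =>
      integrable_comp_eval (μ := μ) (i := k) (f := fun x : ℝ => c k * x) ((hL k).integrable (by norm_num))]
    refine Finset.sum_eq_zero fun k _ => ?_
    rw [integral_comp_eval (μ := μ) (i := k) (f := fun x : ℝ => c k * x) (by fun_prop), integral_const_mul, hmean,
      mul_zero]
  rw [ProbabilityTheory.variance_of_integral_eq_zero (by fun_prop) h0] at hv
  simp only [Finset.sum_apply] at hv
  rw [hv]
  refine Finset.sum_congr rfl fun k _ => ?_
  rw [ProbabilityTheory.variance_of_integral_eq_zero (by fun_prop)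
    (by rw [integral_const_mul, hmean, mul_zero])]
  simp_rw [mul_pow]
  rw [integral_const_mul, hvar, mul_one]

lemma exists_right_inverse_transpose_of_rank {V S : Type*} [Fintype V] [Fintype S]
    [DecidableEq V] [DecidableEq S] (M : Matrix V S ℝ) (h : M.rank = Fintype.card S) :
    ∃ C : Matrix V S ℝ, M.transpose * C = 1 := by
  rw [← Matrix.mulVec_surjective_iff_exists_right_inverse]
  have hr : LinearMap.range M.transpose.mulVecLin = ⊤ := by
    apply Submodule.eq_top_of_finrank_eq
    rw [Module.finrank_pi, ← h, ← Matrix.rank_transpose M, Matrix.rank]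
  exact LinearMap.range_eq_top.1 hr

lemma dotProduct_self_eq_sum_sq {S : Type*} [Fintype S] (a : S → ℝ) :
    a ⬝ᵥ a = ∑ i, a i ^ 2 := by
  simp [dotProduct, sq]

lemma transpose_mul_self_eq_one_of_sum_sq {S1 S2 : Type*} [Fintype S1] [Fintype S2]
    [DecidableEq S1] (U : Matrix S2 S1 ℝ)
    (h : ∀ a, ∑ j, (U.mulVec a) j ^ 2 = ∑ i, a i ^ 2) : U.transpose * U = 1 := by
  have hq : ∀ a, U.mulVec a ⬝ᵥ U.mulVec a = a ⬝ᵥ a := fun a => by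
    rw [dotProduct_self_eq_sum_sq, dotProduct_self_eq_sum_sq, h]
  have hb : ∀ a b, U.mulVec a ⬝ᵥ U.mulVec b = a ⬝ᵥ b := fun a b => by
    have := hq (a + b)
    simp only [Matrix.mulVec_add, add_dotProduct, dotProduct_add, hq] at this
    rw [dotProduct_comm (U.mulVec b), dotProduct_comm b a] at this
    linarith
  ext i k
  have := hb (Pi.single i 1) (Pi.single k 1)
  simpa [Matrix.mul_apply, dotProduct, Matrix.one_apply, Pi.single_apply, eq_comm] using this

/-- Two full column rank matrices with the same row Gram matrix differ by an orthogonal map. -/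
lemma exists_orthogonal_of_sum_sq_eq {V S1 S2 : Type*} [Fintype V] [Fintype S1] [Fintype S2]
    [DecidableEq V] [DecidableEq S1] [DecidableEq S2]
    (M1 : Matrix V S1 ℝ) (M2 : Matrix V S2 ℝ)
    (hrank1 : M1.rank = Fintype.card S1) (hrank2 : M2.rank = Fintype.card S2)
    (hsq : ∀ t, ∑ i, (M1.transpose.mulVec t) i ^ 2 = ∑ j, (M2.transpose.mulVec t) j ^ 2) :
    ∃ (U : Matrix S2 S1 ℝ) (C : Matrix V S1 ℝ), U.transpose * U = 1 ∧ U * U.transpose = 1 ∧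
      M2.transpose = U * M1.transpose ∧ M1.transpose * C = 1 := by
  obtain ⟨C, hC⟩ := exists_right_inverse_transpose_of_rank M1 hrank1
  obtain ⟨C', hC'⟩ := exists_right_inverse_transpose_of_rank M2 hrank2
  have hfac : M2.transpose = M2.transpose * C * M1.transpose := by
    refine Matrix.ext_of_mulVec_single fun v => ?_
    rw [← sub_eq_zero, ← Matrix.mulVec_mulVec, ← Matrix.mulVec_mulVec, ← Matrix.mulVec_sub]
    have h0 := hsq (Pi.single v 1 - C.mulVec (M1.transpose.mulVec (Pi.single v 1)))
    rw [Matrix.mulVec_sub M1.transpose, Matrix.mulVec_mulVec _ M1.transpose C, hC,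
      Matrix.one_mulVec, sub_self] at h0
    simp only [Pi.zero_apply, ne_eq, OfNat.ofNat_ne_zero, not_false_eq_true, zero_pow,
      Finset.sum_const_zero] at h0
    ext j
    have := (Finset.sum_eq_zero_iff_of_nonneg fun i _ => sq_nonneg _).1 h0.symm j
      (Finset.mem_univ j)
    exact pow_eq_zero_iff two_ne_zero |>.1 this
  have hU : (M2.transpose * C).transpose * (M2.transpose * C) = 1 := by
    refine transpose_mul_self_eq_one_of_sum_sq _ fun a => ?_
    rw [← Matrix.mulVec_mulVec, ← hsq, Matrix.mulVec_mulVec, hC, Matrix.one_mulVec]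
  refine ⟨M2.transpose * C, C, hU, ?_, hfac, hC⟩
  have hR : (M2.transpose * C) * (M1.transpose * C') = 1 := by
    rw [← Matrix.mul_assoc, ← hfac, hC']
  have : M1.transpose * C' = (M2.transpose * C).transpose := by
    rw [← Matrix.one_mul (M1.transpose * C'), ← hU, Matrix.mul_assoc, hR, Matrix.mul_one]
  rw [← this, hR]

/-- Identifiability of linear mixtures of independent, standardized, non-symmetric variables:
every column of one mixing matrix is, up to sign, a column of the other. -/
lemma exists_signed_column_of_prod_charFun {V S1 S2 : Type*} [Fintype V] [Fintype S1]
    [Fintype S2] [DecidableEq V] [DecidableEq S1] [DecidableEq S2]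
    (M1 : Matrix V S1 ℝ) (M2 : Matrix V S2 ℝ)
    (hrank1 : M1.rank = Fintype.card S1) (hrank2 : M2.rank = Fintype.card S2)
    (ν1 : S1 → Measure ℝ) (ν2 : S2 → Measure ℝ)
    [∀ i, IsProbabilityMeasure (ν1 i)] [∀ i, IsProbabilityMeasure (ν2 i)]
    (hmean1 : ∀ i, ∫ x, x ∂(ν1 i) = 0) (hvar1 : ∀ i, ∫ x, x ^ 2 ∂(ν1 i) = 1)
    (hnonsym1 : ∀ i, ν1 i ≠ Measure.map (fun t : ℝ => -t) (ν1 i))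
    (hmean2 : ∀ i, ∫ x, x ∂(ν2 i) = 0) (hvar2 : ∀ i, ∫ x, x ^ 2 ∂(ν2 i) = 1)
    (hsq : ∀ t, ∑ i, (M1.transpose.mulVec t) i ^ 2 = ∑ j, (M2.transpose.mulVec t) j ^ 2)
    (hcf : ∀ t, ∏ i, charFun (ν1 i) ((M1.transpose.mulVec t) i)
      = ∏ j, charFun (ν2 j) ((M2.transpose.mulVec t) j)) (i : S1) :
    ∃ (j : S2) (ε : ℝ), (ε = 1 ∨ ε = -1) ∧ (∀ v, M2 v j = ε * M1 v i) ∧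
      ν2 j = Measure.map (fun t => ε * t) (ν1 i) := by
  obtain ⟨U, C, hU, hU', hfac, hC⟩ := exists_orthogonal_of_sum_sq_eq M1 M2 hrank1 hrank2 hsq
  have hcf' : ∀ a, ∏ i, charFun (ν1 i) (a i) = ∏ j, charFun (ν2 j) (U.mulVec a j) := by
    intro a
    have := hcf (C.mulVec a)
    rwa [hfac, Matrix.mulVec_mulVec, hC, Matrix.one_mulVec, Matrix.mulVec_mulVec,
      Matrix.mul_assoc, hC, Matrix.mul_one] at this
  have hcol : ∀ i u, charFun (ν1 i) u = ∏ j, charFun (ν2 j) (U j i * u) := by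
    intro i u
    have := hcf' (Pi.single i u)
    rw [Finset.prod_eq_single i (fun k _ hk => by simp [hk]) (by simp)] at this
    simpa [Matrix.mulVec_single] using this
  have hrow : ∀ j u, charFun (ν2 j) u = ∏ i, charFun (ν1 i) (U j i * u) := by
    intro j u
    have := hcf' (U.transpose.mulVec (Pi.single j u))
    rw [Matrix.mulVec_mulVec, hU', Matrix.one_mulVec,
      Finset.prod_eq_single (f := fun k => charFun (ν2 k) _) j
        (fun k _ hk => by simp [hk]) (by simp)] at this
    simpa [Matrix.mulVec_single, eq_comm] using this
  obtain ⟨j, hj⟩ := exists_abs_eq_one_of_prod_charFun U hU hU' ν1 ν2 hmean1 hvar1 hnonsym1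
    hmean2 hvar2 hcol hrow i
  have hrs : ∑ i, U j i ^ 2 = 1 := by
    simpa [Matrix.mul_apply, sq] using congrFun (congrFun hU' j) j
  have hrow0 : ∀ k, k ≠ i → U j k = 0 := fun k hk =>
    eq_zero_of_sum_sq_eq_one (w := fun k => U j k) hrs hj hk
  refine ⟨j, U j i, eq_or_eq_neg_of_abs_eq hj, fun v => ?_, ?_⟩
  · have := congrFun (congrFun hfac j) v
    rw [Matrix.mul_apply, Finset.sum_eq_single i (fun k _ hk => by simp [hrow0 k hk])
      (by simp)] at this
    exact this
  · have : IsProbabilityMeasure (Measure.map (fun t => U j i * t) (ν1 i)) :=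
      Measure.isProbabilityMeasure_map (by fun_prop)
    refine Measure.ext_of_charFun (funext fun t => ?_)
    rw [charFun_map_mul, hrow, Finset.prod_eq_single i (fun k _ hk => by simp [hrow0 k hk])
      (by simp)]

lemma sum_subtype_of_eq_zero {H : Type*} [Fintype H] (p : H → Prop) [DecidablePred p]
    (f : H → ℝ) (hf : ∀ k, ¬ p k → f k = 0) : ∑ k : {k // p k}, f k = ∑ k, f k := by
  rw [← Fintype.sum_subtype_add_sum_subtype p f, Fintype.sum_eq_zero (fun k : {k // ¬ p k} => f k)
    fun k => hf k k.2, add_zero]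

lemma prod_subtype_of_eq_one {H : Type*} [Fintype H] (p : H → Prop) [DecidablePred p]
    (f : H → ℂ) (hf : ∀ k, ¬ p k → f k = 1) : ∏ k : {k // p k}, f k = ∏ k, f k := by
  rw [← Fintype.prod_subtype_mul_prod_subtype p f,
    Fintype.prod_eq_one (fun k : {k // ¬ p k} => f k) fun k => hf k k.2, mul_one]

/-- The mixing matrix of a linear multi-domain representation inherits the support pattern. -/
lemma mixing_eq_zero_of_representation {V H ι : Type*} [Fintype H] [DecidableEq H]
    (dom : V → ι) (blk : H → Option ι) (B G : Matrix V H ℝ) (A : Matrix H H ℝ)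
    (hG : ∀ v k, ¬ (blk k = none ∨ blk k = some (dom v)) → G v k = 0)
    (hdet : IsUnit (1 - A).det) (hA : ∀ h k, blk h ≠ blk k → A h k = 0)
    (hB : B = G * (1 - A)⁻¹) (v : V) (k : H) (hk : ¬ (blk k = none ∨ blk k = some (dom v))) :
    B v k = 0 := by
  classical
  let D : Matrix H H ℝ := Matrix.diagonal
    fun h => if blk h = none ∨ blk h = some (dom v) then 0 else 1
  have hcomm : (1 - A) * D = D * (1 - A) := by
    ext h l
    rw [Matrix.mul_diagonal, Matrix.diagonal_mul, mul_comm]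
    by_cases hhl : blk h = blk l
    · rw [hhl]
    · have : h ≠ l := fun e => hhl (e ▸ rfl)
      simp [hA h l hhl, this]
  have hinv : (1 - A)⁻¹ * D = D * (1 - A)⁻¹ := by
    calc (1 - A)⁻¹ * D = (1 - A)⁻¹ * (D * ((1 - A) * (1 - A)⁻¹)) := by
          rw [Matrix.mul_nonsing_inv _ hdet, Matrix.mul_one]
      _ = (1 - A)⁻¹ * ((1 - A) * D) * (1 - A)⁻¹ := by
          rw [hcomm]; simp only [Matrix.mul_assoc]
      _ = D * (1 - A)⁻¹ := by
          rw [← Matrix.mul_assoc, Matrix.nonsing_inv_mul _ hdet, Matrix.one_mul]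
  have hBD : (B * D) v k = B v k := by
    simp only [D]
    rw [Matrix.mul_diagonal, if_neg hk, mul_one]
  rw [← hBD, hB, Matrix.mul_assoc, hinv, ← Matrix.mul_assoc, Matrix.mul_apply]
  refine Finset.sum_eq_zero fun l _ => ?_
  simp only [D]
  rw [Matrix.mul_diagonal]
  split_ifs with h
  · simp
  · simp [hG v l h]

lemma sum_mul_mulVec_eq {V H : Type*} [Fintype V] [Fintype H] (p : V → Prop) [DecidablePred p]
    (q : H → Prop) [DecidablePred q] (B : Matrix V H ℝ)
    (hB : ∀ v k, p v → ¬ q k → B v k = 0) (t : {v // p v} → ℝ) :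
    ∃ c : H → ℝ, (∀ k, ¬ q k → c k = 0) ∧
      (∀ k : {k // q k}, ((B.submatrix (Subtype.val : {v // p v} → V)
        (Subtype.val : {k // q k} → H)).transpose.mulVec t) k = c k) ∧
      ∀ x, ∑ v, t v * B.mulVec x v.val = ∑ k, c k * x k := by
  refine ⟨fun k => ∑ v : {v // p v}, B v k * t v, fun k hk => ?_, fun k => rfl, fun x => ?_⟩
  · exact Finset.sum_eq_zero fun v _ => by rw [hB v k v.2 hk, zero_mul]
  · simp only [Matrix.mulVec, dotProduct, Finset.mul_sum, Finset.sum_mul]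
    rw [Finset.sum_comm]
    exact Finset.sum_congr rfl fun k _ => Finset.sum_congr rfl fun v _ => by ring

/-- The signed column correspondence inside one domain. -/
lemma exists_signed_column_of_marginal_eq {V H1 H2 : Type*} [Fintype V] [Fintype H1] [Fintype H2]
    [DecidableEq V] [DecidableEq H1] [DecidableEq H2]
    (p : V → Prop) [DecidablePred p] (q1 : H1 → Prop) [DecidablePred q1]
    (q2 : H2 → Prop) [DecidablePred q2]
    (B1 : Matrix V H1 ℝ) (B2 : Matrix V H2 ℝ)
    (hB1 : ∀ v k, p v → ¬ q1 k → B1 v k = 0) (hB2 : ∀ v k, p v → ¬ q2 k → B2 v k = 0)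
    (μ1 : H1 → Measure ℝ) (μ2 : H2 → Measure ℝ)
    [∀ i, IsProbabilityMeasure (μ1 i)] [∀ i, IsProbabilityMeasure (μ2 i)]
    (hmean1 : ∀ i, ∫ x, x ∂(μ1 i) = 0) (hvar1 : ∀ i, ∫ x, x ^ 2 ∂(μ1 i) = 1)
    (hnonsym1 : ∀ i, μ1 i ≠ Measure.map (fun t : ℝ => -t) (μ1 i))
    (hmean2 : ∀ i, ∫ x, x ∂(μ2 i) = 0) (hvar2 : ∀ i, ∫ x, x ^ 2 ∂(μ2 i) = 1)
    (hrank1 : (B1.submatrix (Subtype.val : {v // p v} → V)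
      (Subtype.val : {k // q1 k} → H1)).rank = Fintype.card {k // q1 k})
    (hrank2 : (B2.submatrix (Subtype.val : {v // p v} → V)
      (Subtype.val : {k // q2 k} → H2)).rank = Fintype.card {k // q2 k})
    (hmarg : Measure.map (fun x (v : {v // p v}) => B1.mulVec x v.val) (Measure.pi μ1)
      = Measure.map (fun x (v : {v // p v}) => B2.mulVec x v.val) (Measure.pi μ2))
    (i : H1) (hi : q1 i) :
    ∃ (j : H2) (ε : ℝ), q2 j ∧ (ε = 1 ∨ ε = -1) ∧ (∀ v, p v → B2 v j = ε * B1 v i) ∧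
      μ2 j = Measure.map (fun t => ε * t) (μ1 i) := by
  have hm1 : Measurable fun (x : H1 → ℝ) (v : {v // p v}) => B1.mulVec x v.val := by
    simp only [Matrix.mulVec, dotProduct]; fun_prop
  have hm2 : Measurable fun (x : H2 → ℝ) (v : {v // p v}) => B2.mulVec x v.val := by
    simp only [Matrix.mulVec, dotProduct]; fun_prop
  have hsq : ∀ t, ∑ i, ((B1.submatrix (Subtype.val : {v // p v} → V)
        (Subtype.val : {k // q1 k} → H1)).transpose.mulVec t) i ^ 2
      = ∑ j, ((B2.submatrix (Subtype.val : {v // p v} → V)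
        (Subtype.val : {k // q2 k} → H2)).transpose.mulVec t) j ^ 2 := by
    intro t
    obtain ⟨c1, hz1, hc1, hs1⟩ := sum_mul_mulVec_eq p q1 B1 hB1 t
    obtain ⟨c2, hz2, hc2, hs2⟩ := sum_mul_mulVec_eq p q2 B2 hB2 t
    have h := congrArg (fun ρ => ∫ y : {v // p v} → ℝ, (∑ v, t v * y v) ^ 2 ∂ρ) hmarg
    rw [integral_map hm1.aemeasurable (Continuous.aestronglyMeasurable (by fun_prop)),
      integral_map hm2.aemeasurable (Continuous.aestronglyMeasurable (by fun_prop))] at h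
    simp only [hs1, hs2] at h
    rw [integral_sq_sum_pi μ1 hmean1 hvar1, integral_sq_sum_pi μ2 hmean2 hvar2] at h
    simp only [hc1, hc2]
    rwa [sum_subtype_of_eq_zero q1 (fun k => c1 k ^ 2) fun k hk => by simp [hz1 k hk],
      sum_subtype_of_eq_zero q2 (fun k => c2 k ^ 2) fun k hk => by simp [hz2 k hk]]
  have hcf : ∀ t, ∏ i : {k // q1 k}, charFun (μ1 i) (((B1.submatrix
        (Subtype.val : {v // p v} → V) (Subtype.val : {k // q1 k} → H1)).transpose.mulVec t) i)
      = ∏ j : {k // q2 k}, charFun (μ2 j) (((B2.submatrix (Subtype.val : {v // p v} → V)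
        (Subtype.val : {k // q2 k} → H2)).transpose.mulVec t) j) := by
    intro t
    obtain ⟨c1, hz1, hc1, hs1⟩ := sum_mul_mulVec_eq p q1 B1 hB1 t
    obtain ⟨c2, hz2, hc2, hs2⟩ := sum_mul_mulVec_eq p q2 B2 hB2 t
    have h := congrArg (fun ρ => ∫ y : {v // p v} → ℝ,
      Complex.exp (((∑ v, t v * y v : ℝ) : ℂ) * Complex.I) ∂ρ) hmarg
    rw [integral_map hm1.aemeasurable (Continuous.aestronglyMeasurable (by fun_prop)),
      integral_map hm2.aemeasurable (Continuous.aestronglyMeasurable (by fun_prop))] at h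
    simp only [hs1, hs2] at h
    rw [integral_exp_sum_pi μ1, integral_exp_sum_pi μ2] at h
    simp only [hc1, hc2]
    rwa [prod_subtype_of_eq_one q1 (fun k => charFun (μ1 k) (c1 k))
        fun k hk => by simp [hz1 k hk],
      prod_subtype_of_eq_one q2 (fun k => charFun (μ2 k) (c2 k))
        fun k hk => by simp [hz2 k hk]]
  obtain ⟨j, ε, hε, hcol, hlaw⟩ := exists_signed_column_of_prod_charFun _ _ hrank1 hrank2
    (fun k : {k // q1 k} => μ1 k) (fun k : {k // q2 k} => μ2 k) (fun k => hmean1 k)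
    (fun k => hvar1 k) (fun k => hnonsym1 k) (fun k => hmean2 k) (fun k => hvar2 k) hsq hcf ⟨i, hi⟩
  exact ⟨j, ε, j.2, hε, fun v hv => hcol ⟨v, hv⟩, hlaw⟩

/-- `ν` is the law `μ` up to the sign `ε`. -/
def IsSignedCopy (ε : ℝ) (μ ν : Measure ℝ) : Prop :=
  (ε = 1 ∨ ε = -1) ∧ ν = Measure.map (fun t => ε * t) μ

lemma IsSignedCopy.symm {ε : ℝ} {μ ν : Measure ℝ} (h : IsSignedCopy ε μ ν) :
    IsSignedCopy ε ν μ := by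
  refine ⟨h.1, ?_⟩
  rw [h.2, Measure.map_map (by fun_prop) (by fun_prop)]
  have : ε * ε = 1 := by rcases h.1 with h | h <;> simp [h]
  simp [Function.comp_def, ← mul_assoc, this]

lemma IsSignedCopy.trans {ε δ : ℝ} {μ ν ρ : Measure ℝ} (h : IsSignedCopy ε μ ν)
    (h' : IsSignedCopy δ ν ρ) : IsSignedCopy (δ * ε) μ ρ := by
  refine ⟨by rcases h.1 with h | h <;> rcases h'.1 with h' | h' <;> simp [h, h'], ?_⟩
  rw [h'.2, h.2, Measure.map_map (by fun_prop) (by fun_prop)]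
  simp [Function.comp_def, mul_assoc]

lemma IsSignedCopy.eq_or_eq_map_neg {ε : ℝ} {μ ν : Measure ℝ} (h : IsSignedCopy ε μ ν) :
    ν = μ ∨ ν = Measure.map (fun t : ℝ => -t) μ := by
  obtain ⟨rfl | rfl, hν⟩ := h
  · left; simpa using hν
  · right; simpa using hν

lemma IsSignedCopy.index_eq {H : Type*} {μ : H → Measure ℝ}
    (hdiff : ∀ i j, i ≠ j → μ i ≠ μ j ∧ μ i ≠ Measure.map (fun t : ℝ => -t) (μ j))
    {ε : ℝ} {i j : H} (h : IsSignedCopy ε (μ i) (μ j)) : i = j := by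
  by_contra hij
  rcases h.eq_or_eq_map_neg with h | h
  · exact (hdiff j i (Ne.symm hij)).1 h
  · exact (hdiff j i (Ne.symm hij)).2 h

lemma IsSignedCopy.sign_unique {ε δ : ℝ} {μ ν : Measure ℝ}
    (hν : ν ≠ Measure.map (fun t : ℝ => -t) ν)
    (h : IsSignedCopy ε μ ν) (h' : IsSignedCopy δ μ ν) : δ = ε := by
  have hc := h.symm.trans h'
  rcases hc.1 with h1 | h1
  · rcases h.1 with h2 | h2 <;> rw [h2] at h1 ⊢ <;> linarith
  · rw [h1] at hc
    exact absurd (by simpa using hc.2) hν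

/-- A bijective signed relabelling of the factors transports the product measure. -/
lemma pi_eq_map_signed_relabelling {H1 H2 : Type*} [Fintype H1] [Fintype H2]
    (μ1 : H1 → Measure ℝ) (μ2 : H2 → Measure ℝ)
    [∀ i, IsProbabilityMeasure (μ1 i)] [∀ i, IsProbabilityMeasure (μ2 i)]
    (φ : H1 ≃ H2) (ε : H1 → ℝ)
    (h : ∀ i, μ2 (φ i) = Measure.map (fun t => ε i * t) (μ1 i)) :
    Measure.pi μ2
      = Measure.map (fun x (j : H2) => ε (φ.symm j) * x (φ.symm j)) (Measure.pi μ1) := by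
  refine Measure.pi_eq fun s hs => ?_
  rw [Measure.map_apply (by fun_prop) (MeasurableSet.univ_pi hs)]
  have hpre : (fun (x : H1 → ℝ) (j : H2) => ε (φ.symm j) * x (φ.symm j)) ⁻¹' Set.univ.pi s
      = Set.univ.pi fun i => (fun t => ε i * t) ⁻¹' s (φ i) := by
    ext x
    simp only [Set.mem_preimage, Set.mem_univ_pi]
    exact ⟨fun hx i => by simpa using hx (φ i), fun hx j => by simpa using hx (φ.symm j)⟩
  rw [hpre, Measure.pi_pi, ← φ.prod_comp]
  refine Finset.prod_congr rfl fun i _ => ?_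
  rw [h, Measure.map_apply (by fun_prop) (hs _)]

lemma eq_of_forall_mem_domain_iff {m : ℕ} (hm : 2 ≤ m) {a b : Option (Fin m)}
    (h : ∀ e, (a = none ∨ a = some e) ↔ (b = none ∨ b = some e)) : a = b := by
  have hne : ∀ e : Fin m, ∃ f, e ≠ f := fun e => by
    have : Nontrivial (Fin m) := Fin.nontrivial_iff_two_le.2 hm
    obtain ⟨f, hf⟩ := exists_ne e
    exact ⟨f, hf.symm⟩
  rcases a with _ | e <;> rcases b with _ | f
  · rfl
  · obtain ⟨g, hg⟩ := hne f
    have := h g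
    simp [hg] at this
  · obtain ⟨g, hg⟩ := hne e
    have := h g
    simp [hg] at this
  · have := h e
    simp only [reduceCtorEq, false_or, true_iff] at this
    exact this.symm

/-- **Identifiability of the joint distribution (Theorem 3.1), uniqueness form.**
Observed variables are indexed by `V` with domain assignment `dom : V → Fin m`
(so `V_e = dom ⁻¹' {e}` are pairwise disjoint with union `V`).  For `r = 1,2`, the
latent index set `H_r` carries a block function `blk_r : H_r → Option (Fin m)`, with
`none` denoting the shared block `L` and `some e` the domain-specific block `I_e`;
`S_e = L ∪ I_e`.  A linear multi-domain representation is `B = G (1 - A)⁻¹` with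
`G` supported on the allowed mixing pattern and `A` having no entries between
different latent blocks, together with a product probability measure. -/
theorem stmt0 {V H1 H2 : Type} [Fintype V] [Fintype H1] [Fintype H2]
    [DecidableEq V] [DecidableEq H1] [DecidableEq H2]
    (m : ℕ) (hm : 2 ≤ m) (dom : V → Fin m)
    (blk1 : H1 → Option (Fin m)) (blk2 : H2 → Option (Fin m))
    (B1 : Matrix V H1 ℝ) (B2 : Matrix V H2 ℝ)
    (μ1 : H1 → Measure ℝ) (μ2 : H2 → Measure ℝ)
    [∀ i, IsProbabilityMeasure (μ1 i)] [∀ i, IsProbabilityMeasure (μ2 i)]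
    -- (B1, ⨂ μ1) is a linear multi-domain representation
    (hrep1 : ∃ (G : Matrix V H1 ℝ) (A : Matrix H1 H1 ℝ),
      (∀ v k, ¬ (blk1 k = none ∨ blk1 k = some (dom v)) → G v k = 0) ∧
      IsUnit (1 - A).det ∧
      (∀ h k, blk1 h ≠ blk1 k → A h k = 0) ∧
      B1 = G * (1 - A)⁻¹)
    -- (B2, ⨂ μ2) is a linear multi-domain representation
    (hrep2 : ∃ (G : Matrix V H2 ℝ) (A : Matrix H2 H2 ℝ),
      (∀ v k, ¬ (blk2 k = none ∨ blk2 k = some (dom v)) → G v k = 0) ∧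
      IsUnit (1 - A).det ∧
      (∀ h k, blk2 h ≠ blk2 k → A h k = 0) ∧
      B2 = G * (1 - A)⁻¹)
    -- marginals: mean zero, unit variance, non-symmetric, pairwise different up to sign
    (hmean1 : ∀ i, ∫ x, x ∂(μ1 i) = 0)
    (hvar1 : ∀ i, ∫ x, x ^ 2 ∂(μ1 i) = 1)
    (hnonsym1 : ∀ i, μ1 i ≠ Measure.map (fun t : ℝ => -t) (μ1 i))
    (hdiff1 : ∀ i j, i ≠ j → μ1 i ≠ μ1 j ∧ μ1 i ≠ Measure.map (fun t : ℝ => -t) (μ1 j))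
    (hmean2 : ∀ i, ∫ x, x ∂(μ2 i) = 0)
    (hvar2 : ∀ i, ∫ x, x ^ 2 ∂(μ2 i) = 1)
    (hnonsym2 : ∀ i, μ2 i ≠ Measure.map (fun t : ℝ => -t) (μ2 i))
    (hdiff2 : ∀ i j, i ≠ j → μ2 i ≠ μ2 j ∧ μ2 i ≠ Measure.map (fun t : ℝ => -t) (μ2 j))
    -- full column rank of B_{V_e, S_e} in every domain
    (hrank1 : ∀ e : Fin m,
      (B1.submatrix (Subtype.val : {v // dom v = e} → V)
          (Subtype.val : {k // blk1 k = none ∨ blk1 k = some e} → H1)).rank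
        = Fintype.card {k // blk1 k = none ∨ blk1 k = some e})
    (hrank2 : ∀ e : Fin m,
      (B2.submatrix (Subtype.val : {v // dom v = e} → V)
          (Subtype.val : {k // blk2 k = none ∨ blk2 k = some e} → H2)).rank
        = Fintype.card {k // blk2 k = none ∨ blk2 k = some e})
    -- equal domain marginals
    (hmarg : ∀ e : Fin m,
      Measure.map (fun x (v : {v // dom v = e}) => B1.mulVec x v.val) (Measure.pi μ1)
        = Measure.map (fun x (v : {v // dom v = e}) => B2.mulVec x v.val) (Measure.pi μ2)) :
    -- conclusion: blocks have equal sizes and B2 = B1 Ψ, P2 = Ψᵀ # P1 for a block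
    -- signed permutation Ψ (encoded by a block-preserving bijection φ and signs ε);
    -- in particular the joint distributions coincide
    Fintype.card {k : H1 // blk1 k = none} = Fintype.card {k : H2 // blk2 k = none} ∧
    (∀ e : Fin m, Fintype.card {k : H1 // blk1 k = some e}
        = Fintype.card {k : H2 // blk2 k = some e}) ∧
    ∃ (φ : H1 ≃ H2) (ε : H1 → ℝ),
      (∀ i, ε i = 1 ∨ ε i = -1) ∧
      (∀ i, blk2 (φ i) = blk1 i) ∧
      (∀ v i, B2 v (φ i) = ε i * B1 v i) ∧
      Measure.pi μ2
        = Measure.map (fun x (j : H2) => ε (φ.symm j) * x (φ.symm j)) (Measure.pi μ1) ∧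
      Measure.map (fun x => B1.mulVec x) (Measure.pi μ1)
        = Measure.map (fun x => B2.mulVec x) (Measure.pi μ2) := by
  obtain ⟨G1, A1, hG1, hdet1, hA1, hGA1⟩ := hrep1
  obtain ⟨G2, A2, hG2, hdet2, hA2, hGA2⟩ := hrep2
  have hB1 := mixing_eq_zero_of_representation dom blk1 B1 G1 A1 hG1 hdet1 hA1 hGA1
  have hB2 := mixing_eq_zero_of_representation dom blk2 B2 G2 A2 hG2 hdet2 hA2 hGA2
  have hfwd : ∀ e i, (blk1 i = none ∨ blk1 i = some e) → ∃ (j : H2) (ε : ℝ),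
      (blk2 j = none ∨ blk2 j = some e) ∧ (∀ v, dom v = e → B2 v j = ε * B1 v i) ∧
        IsSignedCopy ε (μ1 i) (μ2 j) := fun e i hi => by
    obtain ⟨j, ε, hj, hε, hcol, hlaw⟩ := exists_signed_column_of_marginal_eq (fun v => dom v = e)
      (fun k => blk1 k = none ∨ blk1 k = some e) (fun k => blk2 k = none ∨ blk2 k = some e) B1 B2
      (fun v k hv => by subst hv; exact hB1 v k) (fun v k hv => by subst hv; exact hB2 v k)
      μ1 μ2 hmean1 hvar1 hnonsym1 hmean2 hvar2 (hrank1 e) (hrank2 e) (hmarg e) i hi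
    exact ⟨j, ε, hj, hcol, hε, hlaw⟩
  have hbwd : ∀ e j, (blk2 j = none ∨ blk2 j = some e) → ∃ (i : H1) (ε : ℝ),
      (blk1 i = none ∨ blk1 i = some e) ∧ IsSignedCopy ε (μ1 i) (μ2 j) := fun e j hj => by
    obtain ⟨i, ε, hi, hε, -, hlaw⟩ := exists_signed_column_of_marginal_eq (fun v => dom v = e)
      (fun k => blk2 k = none ∨ blk2 k = some e) (fun k => blk1 k = none ∨ blk1 k = some e) B2 B1
      (fun v k hv => by subst hv; exact hB2 v k) (fun v k hv => by subst hv; exact hB1 v k)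
      μ2 μ1 hmean2 hvar2 hnonsym2 hmean1 hvar1 (hrank2 e) (hrank1 e) (hmarg e).symm j hj
    exact ⟨i, ε, hi, IsSignedCopy.symm ⟨hε, hlaw⟩⟩
  have hcover : ∀ a : Option (Fin m), ∃ e, a = none ∨ a = some e := fun a => by
    cases a with
    | none => exact ⟨⟨0, by omega⟩, Or.inl rfl⟩
    | some e => exact ⟨e, Or.inr rfl⟩
  have hmatch : ∀ i, ∃ (j : H2) (ε : ℝ), IsSignedCopy ε (μ1 i) (μ2 j) := fun i => by
    obtain ⟨e, he⟩ := hcover (blk1 i)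
    obtain ⟨j, ε, -, -, h⟩ := hfwd e i he
    exact ⟨j, ε, h⟩
  choose f ε hf using hmatch
  have hf_unique : ∀ i j δ, IsSignedCopy δ (μ1 i) (μ2 j) → f i = j := fun i j δ h =>
    ((hf i).symm.trans h).index_eq hdiff2
  have hbij : Function.Bijective f := by
    refine ⟨fun i k hik => ?_, fun j => ?_⟩
    · have hk := hf k
      rw [← hik] at hk
      exact ((hf i).trans hk.symm).index_eq hdiff1
    · obtain ⟨e, he⟩ := hcover (blk2 j)
      obtain ⟨i, δ, -, h⟩ := hbwd e j he
      exact ⟨i, hf_unique i j δ h⟩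
  have hmem : ∀ i e, (blk2 (f i) = none ∨ blk2 (f i) = some e) ↔
      (blk1 i = none ∨ blk1 i = some e) := fun i e => by
    constructor
    · intro h
      obtain ⟨k, δ, hk, hc⟩ := hbwd e (f i) h
      rwa [hbij.1 (hf_unique k _ δ hc)] at hk
    · intro h
      obtain ⟨j, δ, hj, -, hc⟩ := hfwd e i h
      rwa [hf_unique i j δ hc]
  have hblk : ∀ i, blk2 (f i) = blk1 i := fun i => eq_of_forall_mem_domain_iff hm (hmem i)
  have hcol : ∀ v i, B2 v (f i) = ε i * B1 v i := fun v i => by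
    by_cases h : blk1 i = none ∨ blk1 i = some (dom v)
    · obtain ⟨j, δ, -, hj, hc⟩ := hfwd (dom v) i h
      obtain rfl := hf_unique i j δ hc
      rw [hj v rfl, IsSignedCopy.sign_unique (hnonsym2 _) (hf i) hc]
    · rw [hB1 v i h, hB2 v (f i) (mt (hmem i _).1 h), mul_zero]
  let φ : H1 ≃ H2 := Equiv.ofBijective f hbij
  have hcard : ∀ a, Fintype.card {k : H1 // blk1 k = a} = Fintype.card {k : H2 // blk2 k = a} :=
    fun a => Fintype.card_congr (φ.subtypeEquiv fun i => by
      rw [← hblk i]; rfl)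
  have hpi := pi_eq_map_signed_relabelling μ1 μ2 φ ε fun i => (hf i).2
  refine ⟨hcard none, fun e => hcard (some e), φ, ε, fun i => (hf i).1, hblk, hcol, hpi, ?_⟩
  have hmeas : Measurable fun x : H2 → ℝ => B2.mulVec x := by
    refine measurable_pi_iff.2 fun v => ?_
    simp only [Matrix.mulVec, dotProduct]; fun_prop
  rw [hpi, Measure.map_map hmeas (by fun_prop)]
  congr 1
  ext x v
  simp only [Function.comp_apply, Matrix.mulVec, dotProduct]
  rw [← φ.sum_comp]
  refine Finset.sum_congr rfl fun i _ => ?_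
  have hsq : ε i * ε i = 1 := by rcases (hf i).1 with h | h <;> simp [h]
  rw [φ.symm_apply_apply, show B2 v (φ i) = ε i * B1 v i from hcol v i]
  linear_combination (-(B1 v i * x i)) * hsq
end

section
/- Let m ≥ 2 and let (B,P) be a linear multi-domain representation over observed index sets V_1,…,V_m and latent index data H = L ∪ I_1 ∪ ⋯ ∪ I_m (with S_e = L ∪ I_e), whose marginals P_i all have mean zero and unit variance and are non-symmetric (P_i ≠ (−1)#P_i), and such that B_{V_e,S_e} has full column rank for every domain e. Suppose one of the following holds: (i) there exist distinct i, j ∈ L with P_i = P_j or P_i = (−1)#P_j; (ii) there exist i ∈ L and j ∈ I_e for some e with P_i = P_j or P_i = (−1)#P_j; (iii) for every e ∈ {1,…,m} there exists i_e ∈ I_e such that for all e ≠ f, P_{i_e} = P_{i_f} or P_{i_e} = (−1)#P_{i_f}. Then the joint distribution is not identifiable from the domain marginals: there exist multi-domain index data H̃ = L̃ ∪ Ĩ_1 ∪ ⋯ ∪ Ĩ_m over the same observed sets V_1,…,V_m and a linear multi-domain representation (B̃, P̃) over this data, with all marginals of P̃ of mean zero and unit variance and with B̃_{V_e,S̃_e}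 of full column rank for every e, such that B̃_{V_e,·}#P̃ = B_{V_e,·}#P for every domain e, but B̃#P̃ ≠ B#P. -/
open MeasureTheory

open ProbabilityTheory

section LatentColumns

variable {V H K : Type*} [Fintype H] [Fintype K] {m : ℕ}

/-- The pushforward of a product measure under a signed selection of distinct coordinates is the
product of the pushforwards of the selected marginals. -/
lemma map_pi_scaled_selection (μ : H → Measure ℝ) [∀ i, IsProbabilityMeasure (μ i)]
    {σ : K → H} (hσ : Function.Injective σ) (s : K → ℝ) :
    Measure.map (fun y k => s k * y (σ k)) (Measure.pi μ)
      = Measure.pi fun k => Measure.map (s k * ·) (μ (σ k)) := by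
  have h0 : iIndepFun (fun h (y : H → ℝ) => y h) (Measure.pi μ) :=
    iIndepFun_pi (X := fun _ (t : ℝ) => t) fun _ => aemeasurable_id
  have h1 : iIndepFun (fun k (y : H → ℝ) => s k * y (σ k)) (Measure.pi μ) :=
    (h0.precomp hσ).comp (fun k t => s k * t) fun k => measurable_const_mul (s k)
  have hm (k : K) : AEMeasurable (fun y : H → ℝ => s k * y (σ k)) (Measure.pi μ) :=
    ((measurable_const_mul (s k)).comp (measurable_pi_apply (σ k))).aemeasurable
  rw [(iIndepFun_iff_map_fun_eq_pi_map hm).1 h1]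
  congr 1
  funext k
  rw [← (measurePreserving_eval μ (σ k)).map_eq,
    Measure.map_map (measurable_const_mul (s k)) (measurable_pi_apply (σ k))]
  rfl

lemma memLp_two_of_integral_sq_eq_one {ν : Measure ℝ} (h : ∫ x, x ^ 2 ∂ν = 1) :
    MemLp (fun x : ℝ => x) 2 ν := by
  rw [memLp_two_iff_integrable_sq (by fun_prop)]
  by_contra hn
  rw [integral_undef hn] at h
  exact zero_ne_one h

lemma measurable_mulVec (M : Matrix V H ℝ) : Measurable fun x : H → ℝ => M.mulVec x := by
  unfold Matrix.mulVec dotProduct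
  fun_prop

/-- The second moments of a linear image of independent standardized variables. -/
lemma integral_mulVec_mul_mulVec (μ : H → Measure ℝ) [∀ i, IsProbabilityMeasure (μ i)]
    (hmean : ∀ i, ∫ x, x ∂(μ i) = 0) (hvar : ∀ i, ∫ x, x ^ 2 ∂(μ i) = 1)
    (B : Matrix V H ℝ) (v w : V) :
    ∫ y, B.mulVec y v * B.mulVec y w ∂(Measure.pi μ) = ∑ h, B v h * B w h := by
  classical
  have hL (h : H) : MemLp (fun y : H → ℝ => y h) 2 (Measure.pi μ) :=
    (memLp_two_of_integral_sq_eq_one (hvar h)).comp_measurePreserving (measurePreserving_eval μ h)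
  have hI (h k : H) : Integrable (fun y : H → ℝ => y h * y k) (Measure.pi μ) :=
    (hL h).integrable_mul (hL k)
  have hE (h k : H) : ∫ y, y h * y k ∂(Measure.pi μ) = if h = k then 1 else 0 := by
    split_ifs with hhk
    · subst hhk
      simp_rw [← sq]
      rw [integral_comp_eval (μ := μ) (i := h) (f := fun t : ℝ => t ^ 2) (by fun_prop), hvar]
    · have h0 : iIndepFun (fun h (y : H → ℝ) => y h) (Measure.pi μ) :=
        iIndepFun_pi (X := fun _ (t : ℝ) => t) fun _ => aemeasurable_id
      rw [(h0.indepFun hhk).integral_fun_mul_eq_mul_integral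
          (hL h).aestronglyMeasurable (hL k).aestronglyMeasurable,
        integral_comp_eval (μ := μ) (i := h) (f := fun t : ℝ => t) (by fun_prop), hmean, zero_mul]
  have hexp (y : H → ℝ) : B.mulVec y v * B.mulVec y w
      = ∑ h, ∑ k, B v h * B w k * (y h * y k) := by
    simp only [Matrix.mulVec, dotProduct, Finset.sum_mul_sum]
    exact Finset.sum_congr rfl fun h _ => Finset.sum_congr rfl fun k _ => by ring
  simp_rw [hexp]
  rw [integral_finsetSum _ fun h _ => integrable_finsetSum _ fun k _ => (hI h k).const_mul _]
  refine Finset.sum_congr rfl fun h _ => ?_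
  rw [integral_finsetSum _ fun k _ => (hI h k).const_mul _]
  simp [integral_const_mul, hE]

/-- A real matrix whose rows in `{v | p v}` are supported on the columns in `{k | q k}` has full
column rank on that block iff its kernel on those rows vanishes on `{k | q k}`. -/
lemma rank_submatrix_eq_card_iff (B : Matrix V H ℝ) (p : V → Prop) (q : H → Prop)
    [DecidablePred p] [DecidablePred q] (hsupp : ∀ v k, p v → ¬ q k → B v k = 0) :
    (B.submatrix (Subtype.val : {v // p v} → V) (Subtype.val : {k // q k} → H)).rank
        = Fintype.card {k // q k}
      ↔ ∀ c : H → ℝ, (∀ v, p v → ∑ k, B v k * c k = 0) → ∀ k, q k → c k = 0 := by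
  rw [Matrix.rank_eq_finrank_span_cols, eq_comm, ← Set.finrank,
    ← linearIndependent_iff_card_eq_finrank_span, Fintype.linearIndependent_iff]
  have hsum (c : H → ℝ) (v : V) (hv : p v) :
      ∑ k : {k // q k}, B v k * c k = ∑ k, B v k * c k :=
    Fintype.sum_of_injective _ Subtype.val_injective _ _
      (fun k hk => by rw [hsupp v k hv fun h => hk ⟨⟨k, h⟩, rfl⟩, zero_mul]) fun _ => rfl
  constructor
  · intro h c hc k hk
    refine h (fun k => c k) ?_ ⟨k, hk⟩
    funext v
    rw [Finset.sum_apply, Pi.zero_apply, ← hc v v.2, ← hsum c v v.2]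
    exact Finset.sum_congr rfl fun k _ => mul_comm _ _
  · intro h c hc k
    have := h (fun k => if hk : q k then c ⟨k, hk⟩ else 0) (fun v hv => ?_) k k.2
    · simpa [k.2] using this
    · rw [← hsum _ v hv]
      have := congrFun hc ⟨v, hv⟩
      rw [Finset.sum_apply, Pi.zero_apply] at this
      rw [← this]
      exact Finset.sum_congr rfl fun k _ => by simp [k.2, mul_comm]

/-- The inverse of a matrix that is block diagonal with respect to `blk` is block diagonal. -/
lemma inv_apply_eq_zero_of_block_ne [DecidableEq H] (blk : H → Option (Fin m)) (N : Matrix H H ℝ)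
    (hN : IsUnit N.det) (hb : ∀ h k, blk h ≠ blk k → N h k = 0) {h k : H}
    (hhk : blk h ≠ blk k) : N⁻¹ h k = 0 := by
  let b : H → WithBot (Fin m) := blk
  have : Invertible N := Matrix.invertibleOfIsUnitDet N hN
  have h1 : N.BlockTriangular b := fun i j hij => hb i j (ne_of_gt (α := WithBot (Fin m)) hij)
  have h2 : N.BlockTriangular (OrderDual.toDual ∘ b) :=
    fun i j hij =>
    hb i j (ne_of_lt (α := WithBot (Fin m)) (OrderDual.toDual_lt_toDual.1 hij))
  have hne : b h ≠ b k := hhk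
  rcases lt_or_gt_of_ne hne with hlt | hgt
  · exact Matrix.blockTriangular_inv_of_blockTriangular h2 (OrderDual.toDual_lt_toDual.2 hlt)
  · exact Matrix.blockTriangular_inv_of_blockTriangular h1 hgt

/-- A linear multi-domain representation whose latent columns can be matched differently in two
domains, compatibly with the marginals, is not identifiable. In domain `e` the new column `k` is
the old column `σ e k` up to the sign `s e k`. -/
lemma exists_representation_of_rematching [Fintype V] [DecidableEq V] [DecidableEq H]
    (dom : V → Fin m) (blk : H → Option (Fin m)) (B : Matrix V H ℝ) (μ : H → Measure ℝ)
    [∀ i, IsProbabilityMeasure (μ i)]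
    (hsupp : ∀ v k, ¬ (blk k = none ∨ blk k = some (dom v)) → B v k = 0)
    (hmean : ∀ i, ∫ x, x ∂(μ i) = 0) (hvar : ∀ i, ∫ x, x ^ 2 ∂(μ i) = 1)
    (hrank : ∀ e : Fin m,
      (B.submatrix (Subtype.val : {v // dom v = e} → V)
          (Subtype.val : {k // blk k = none ∨ blk k = some e} → H)).rank
        = Fintype.card {k // blk k = none ∨ blk k = some e})
    [DecidableEq K] (blk' : K → Option (Fin m)) (μ' : K → Measure ℝ)
    (hprob : ∀ k, IsProbabilityMeasure (μ' k))
    (hmean' : ∀ k, ∫ x, x ∂(μ' k) = 0) (hvar' : ∀ k, ∫ x, x ^ 2 ∂(μ' k) = 1)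
    (σ : Fin m → K → H) (hσ : ∀ e, Function.Injective (σ e))
    (hblk : ∀ e k, (blk' k = none ∨ blk' k = some e) ↔
      (blk (σ e k) = none ∨ blk (σ e k) = some e))
    (hrange : ∀ e h, (blk h = none ∨ blk h = some e) → h ∈ Set.range (σ e))
    (s : Fin m → K → ℝ) (hs : ∀ e k, s e k * s e k = 1)
    (hμ : ∀ e k, μ' k = Measure.map (s e k * ·) (μ (σ e k)))
    (e f : Fin m) (k₀ : K)
    (he : blk (σ e k₀) = none ∨ blk (σ e k₀) = some e)
    (hf : blk (σ f k₀) = none ∨ blk (σ f k₀) = some f) (hne : σ e k₀ ≠ σ f k₀) :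
    ∃ B' : Matrix V K ℝ,
      (∃ (G : Matrix V K ℝ) (A : Matrix K K ℝ),
        (∀ v k, ¬ (blk' k = none ∨ blk' k = some (dom v)) → G v k = 0) ∧
        IsUnit (1 - A).det ∧
        (∀ h k, blk' h ≠ blk' k → A h k = 0) ∧
        B' = G * (1 - A)⁻¹) ∧
      (∀ e : Fin m,
        (B'.submatrix (Subtype.val : {v // dom v = e} → V)
            (Subtype.val : {k // blk' k = none ∨ blk' k = some e} → K)).rank
          = Fintype.card {k // blk' k = none ∨ blk' k = some e}) ∧
      (∀ e : Fin m,
        Measure.map (fun x (v : {v // dom v = e}) => B'.mulVec x v.val) (Measure.pi μ')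
          = Measure.map (fun x (v : {v // dom v = e}) => B.mulVec x v.val) (Measure.pi μ)) ∧
      Measure.map (fun x => B'.mulVec x) (Measure.pi μ')
        ≠ Measure.map (fun x => B.mulVec x) (Measure.pi μ) := by
  have hker (e : Fin m) := (rank_submatrix_eq_card_iff B (fun v => dom v = e)
    (fun k => blk k = none ∨ blk k = some e)
    (fun v k hv hk => hsupp v k (by rwa [hv]))).1 (hrank e)
  have hsum (v : V) (g : H → ℝ) :
      ∑ k, B v (σ (dom v) k) * g (σ (dom v) k) = ∑ h, B v h * g h :=
    Fintype.sum_of_injective _ (hσ (dom v)) _ _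
      (fun h hh => by rw [hsupp v h fun hh' => hh (hrange _ _ hh'), zero_mul]) fun _ => rfl
  let B' : Matrix V K ℝ := Matrix.of fun v k => s (dom v) k * B v (σ (dom v) k)
  have hB' (v k) : B' v k = s (dom v) k * B v (σ (dom v) k) := rfl
  have hsupp' (v k) (h : ¬ (blk' k = none ∨ blk' k = some (dom v))) : B' v k = 0 := by
    rw [hblk] at h
    rw [hB', hsupp v _ h, mul_zero]
  refine ⟨B', ⟨B', 0, hsupp', by simp, by simp, by simp⟩, fun e => ?_, fun e => ?_, fun heq => ?_⟩
  · refine (rank_submatrix_eq_card_iff B' (fun v => dom v = e)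
      (fun k => blk' k = none ∨ blk' k = some e)
      (fun v k hv hk => hsupp' v k (by rwa [hv]))).2 fun c hc k hk => ?_
    have := hker e (Function.extend (σ e) (fun k => s e k * c k) 0) (fun v hv => ?_) (σ e k)
      ((hblk e k).1 hk)
    · rw [(hσ e).extend_apply] at this
      linear_combination s e k * this - c k * hs e k
    · subst hv
      rw [← hsum, ← hc v rfl]
      refine Finset.sum_congr rfl fun k _ => ?_
      rw [(hσ _).extend_apply, hB']
      ring
  · have hpi : Measure.pi μ' = Measure.map (fun y k => s e k * y (σ e k)) (Measure.pi μ) := by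
      rw [map_pi_scaled_selection μ (hσ e)]
      exact congrArg Measure.pi (funext (hμ e))
    have hm1 : Measurable fun (x : K → ℝ) (v : {v // dom v = e}) => B'.mulVec x v.val :=
      measurable_pi_lambda _ fun v => (measurable_pi_apply v.val).comp (measurable_mulVec B')
    rw [hpi, Measure.map_map hm1 (by fun_prop)]
    congr 1
    funext y ⟨v, hv⟩
    subst hv
    simp only [Function.comp_apply, Matrix.mulVec, dotProduct]
    rw [← hsum]
    refine Finset.sum_congr rfl fun k _ => ?_
    rw [hB']
    linear_combination B v (σ (dom v) k) * y (σ (dom v) k) * hs (dom v) k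
  · have hcov (v w : V) : ∑ k, B' v k * B' w k = ∑ h, B v h * B w h := by
      rw [← integral_mulVec_mul_mulVec μ hmean hvar B v w,
        ← integral_mulVec_mul_mulVec μ' hmean' hvar' B' v w]
      have hg {ν : Measure (V → ℝ)} : AEStronglyMeasurable (fun z : V → ℝ => z v * z w) ν := by
        fun_prop
      have := congrArg (fun ν => ∫ z : V → ℝ, z v * z w ∂ν) heq
      simpa only [integral_map (measurable_mulVec B').aemeasurable hg,
        integral_map (measurable_mulVec B).aemeasurable hg] using this
    have hcol (w : V) (hw : dom w = f) :
        s e k₀ * s f k₀ * B w (σ f k₀) = B w (σ e k₀) := by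
      have := hker e
        (fun h => Function.extend (σ e) (fun k => s e k * s f k * B w (σ f k)) 0 h - B w h)
        (fun v hv => ?_) _ he
      · rw [(hσ e).extend_apply] at this
        linarith
      · simp_rw [mul_sub]
        rw [Finset.sum_sub_distrib, ← hcov, sub_eq_zero, ← hsum]
        subst hv hw
        refine Finset.sum_congr rfl fun k _ => ?_
        rw [(hσ _).extend_apply, hB', hB']
        ring
    have := hker f (Pi.single (σ f k₀) (s e k₀ * s f k₀) - Pi.single (σ e k₀) 1)
      (fun w hw => ?_) _ hf
    · rw [Pi.sub_apply, Pi.single_eq_same, Pi.single_eq_of_ne hne.symm, sub_zero] at this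
      have h1 := hs e k₀
      have h2 := hs f k₀
      have : (1 : ℝ) = 0 := by
        calc (1 : ℝ) = (s e k₀ * s e k₀) * (s f k₀ * s f k₀) := by rw [h1, h2, mul_one]
          _ = (s e k₀ * s f k₀) * (s e k₀ * s f k₀) := by ring
          _ = 0 := by rw [this, mul_zero]
      exact one_ne_zero this
    · simp only [Pi.sub_apply, mul_sub, Finset.sum_sub_distrib, Pi.single_apply, mul_ite, mul_zero,
        Finset.sum_ite_eq', Finset.mem_univ, if_true, mul_one]
      linear_combination hcol w hw

lemma exists_sign_of_eq_or_eq_map_neg {μ ν : Measure ℝ}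
    (h : μ = ν ∨ μ = Measure.map (fun t : ℝ => -t) ν) :
    ∃ s : ℝ, s * s = 1 ∧ μ = Measure.map (s * ·) ν := by
  rcases h with h | h
  · exact ⟨1, by norm_num, by simpa using h⟩
  · exact ⟨-1, by norm_num, by simpa using h⟩

lemma map_mul_map_mul_of_mul_self_eq_one {μ ν : Measure ℝ} {s : ℝ} (hs : s * s = 1)
    (h : μ = Measure.map (s * ·) ν) : ν = Measure.map (s * ·) μ := by
  rw [h, Measure.map_map (measurable_const_mul s) (measurable_const_mul s)]
  have : ((s * ·) ∘ (s * ·) : ℝ → ℝ) = id := by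
    funext t
    simp [← mul_assoc, hs]
  rw [this, Measure.map_id]

end LatentColumns

/-- **Necessity of pairwise different error distributions (Proposition B.1).**
If the marginals of a linear multi-domain representation coincide (up to sign) in one of
the three listed patterns, then the joint distribution is not identifiable: there is
another linear multi-domain representation over (possibly different) latent index data,
with mean-zero unit-variance marginals and full column rank in every domain, which
produces the same domain marginals but a different joint distribution. -/
theorem stmt1 {V H : Type} [Fintype V] [Fintype H] [DecidableEq V] [DecidableEq H]
    (m : ℕ) (hm : 2 ≤ m) (dom : V → Fin m) (blk : H → Option (Fin m))
    (B : Matrix V H ℝ) (μ : H → Measure ℝ) [∀ i, IsProbabilityMeasure (μ i)]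
    (hrep : ∃ (G : Matrix V H ℝ) (A : Matrix H H ℝ),
      (∀ v k, ¬ (blk k = none ∨ blk k = some (dom v)) → G v k = 0) ∧
      IsUnit (1 - A).det ∧
      (∀ h k, blk h ≠ blk k → A h k = 0) ∧
      B = G * (1 - A)⁻¹)
    (hmean : ∀ i, ∫ x, x ∂(μ i) = 0)
    (hvar : ∀ i, ∫ x, x ^ 2 ∂(μ i) = 1)
    (hnonsym : ∀ i, μ i ≠ Measure.map (fun t : ℝ => -t) (μ i))
    (hrank : ∀ e : Fin m,
      (B.submatrix (Subtype.val : {v // dom v = e} → V)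
          (Subtype.val : {k // blk k = none ∨ blk k = some e} → H)).rank
        = Fintype.card {k // blk k = none ∨ blk k = some e})
    (hcases :
      -- (i) two shared marginals agree up to sign
      (∃ i j, i ≠ j ∧ blk i = none ∧ blk j = none ∧
        (μ i = μ j ∨ μ i = Measure.map (fun t : ℝ => -t) (μ j))) ∨
      -- (ii) a shared marginal agrees up to sign with a domain-specific one
      (∃ i j e, blk i = none ∧ blk j = some e ∧
        (μ i = μ j ∨ μ i = Measure.map (fun t : ℝ => -t) (μ j))) ∨
      -- (iii) in every domain there is a domain-specific marginal, all agreeing up to sign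
      (∃ ι : Fin m → H, (∀ e, blk (ι e) = some e) ∧
        ∀ e f, e ≠ f →
          μ (ι e) = μ (ι f) ∨ μ (ι e) = Measure.map (fun t : ℝ => -t) (μ (ι f)))) :
    ∃ (n : ℕ) (blk' : Fin n → Option (Fin m)) (B' : Matrix V (Fin n) ℝ)
      (μ' : Fin n → Measure ℝ),
      (∀ i, IsProbabilityMeasure (μ' i)) ∧
      (∃ (G : Matrix V (Fin n) ℝ) (A : Matrix (Fin n) (Fin n) ℝ),
        (∀ v k, ¬ (blk' k = none ∨ blk' k = some (dom v)) → G v k = 0) ∧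
        IsUnit (1 - A).det ∧
        (∀ h k, blk' h ≠ blk' k → A h k = 0) ∧
        B' = G * (1 - A)⁻¹) ∧
      (∀ i, ∫ x, x ∂(μ' i) = 0) ∧
      (∀ i, ∫ x, x ^ 2 ∂(μ' i) = 1) ∧
      (∀ e : Fin m,
        (B'.submatrix (Subtype.val : {v // dom v = e} → V)
            (Subtype.val : {k // blk' k = none ∨ blk' k = some e} → Fin n)).rank
          = Fintype.card {k // blk' k = none ∨ blk' k = some e}) ∧
      (∀ e : Fin m,
        Measure.map (fun x (v : {v // dom v = e}) => B'.mulVec x v.val) (Measure.pi μ')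
          = Measure.map (fun x (v : {v // dom v = e}) => B.mulVec x v.val) (Measure.pi μ)) ∧
      Measure.map (fun x => B'.mulVec x) (Measure.pi μ')
        ≠ Measure.map (fun x => B.mulVec x) (Measure.pi μ) := by
  obtain ⟨G, A, hG, hA, hAb, hB⟩ := hrep
  have hsupp : ∀ v k, ¬ (blk k = none ∨ blk k = some (dom v)) → B v k = 0 := by
    intro v k hk
    rw [hB, Matrix.mul_apply]
    refine Finset.sum_eq_zero fun h _ => ?_
    by_cases hhk : blk h = blk k
    · rw [hG v h (by rwa [hhk]), zero_mul]
    · rw [inv_apply_eq_zero_of_block_ne blk _ hA (fun i j hij => ?_) hhk, mul_zero]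
      rw [Matrix.sub_apply, hAb i j hij, sub_zero, Matrix.one_apply_ne]
      rintro rfl
      exact hij rfl
  suffices hK : ∃ (K : Type) (_ : Fintype K) (blk' : K → Option (Fin m)) (τ : K → H)
      (σ : Fin m → K → H) (s : Fin m → K → ℝ),
      (∀ e, Function.Injective (σ e)) ∧
      (∀ e k, (blk' k = none ∨ blk' k = some e) ↔
        (blk (σ e k) = none ∨ blk (σ e k) = some e)) ∧
      (∀ e h, (blk h = none ∨ blk h = some e) → h ∈ Set.range (σ e)) ∧
      (∀ e k, s e k * s e k = 1) ∧
      (∀ e k, μ (τ k) = Measure.map (s e k * ·) (μ (σ e k))) ∧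
      ∃ e f k, (blk (σ e k) = none ∨ blk (σ e k) = some e) ∧
        (blk (σ f k) = none ∨ blk (σ f k) = some f) ∧ σ e k ≠ σ f k by
    obtain ⟨K, _, blk', τ, σ, s, hσ, hblk, hrange, hs, hμ, e, f, k, he, hf, hne⟩ := hK
    let φ := Fintype.equivFin K
    obtain ⟨B', h1, h2, h3, h4⟩ := exists_representation_of_rematching dom blk B μ hsupp hmean hvar
      hrank (fun i => blk' (φ.symm i)) (fun i => μ (τ (φ.symm i))) (fun _ => inferInstance)
      (fun _ => hmean _) (fun _ => hvar _) (fun e i => σ e (φ.symm i))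
      (fun e => (hσ e).comp φ.symm.injective) (fun e i => hblk e _)
      (fun e h hh => by
        obtain ⟨k, hk⟩ := hrange e h hh
        exact ⟨φ k, by simpa using hk⟩)
      (fun e i => s e (φ.symm i)) (fun e i => hs e _) (fun e i => hμ e _) e f (φ k)
      (by simpa using he) (by simpa using hf) (by simpa using hne)
    exact ⟨_, _, B', _, fun _ => inferInstance, h1, fun _ => hmean _, fun _ => hvar _, h2, h3, h4⟩
  let e₀ : Fin m := ⟨0, by lia⟩
  let e₁ : Fin m := ⟨1, by lia⟩
  have h01 : e₀ ≠ e₁ := by simp [e₀, e₁]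
  have hcases' : (∃ e f i j, e ≠ f ∧ i ≠ j ∧ blk i = none ∧ (blk j = none ∨ blk j = some e) ∧
      (μ i = μ j ∨ μ i = Measure.map (fun t : ℝ => -t) (μ j))) ∨
      ∃ ι : Fin m → H, (∀ e, blk (ι e) = some e) ∧ ∀ e f, e ≠ f →
        μ (ι e) = μ (ι f) ∨ μ (ι e) = Measure.map (fun t : ℝ => -t) (μ (ι f)) := by
    rcases hcases with ⟨i, j, hij, hi, hj, hμ⟩ | ⟨i, j, e, hi, hj, hμ⟩ | h
    · exact Or.inl ⟨e₀, e₁, i, j, h01, hij, hi, Or.inl hj, hμ⟩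
    · obtain ⟨f, hf⟩ : ∃ f, e ≠ f := by
        by_cases he : e = e₀
        · exact ⟨e₁, he ▸ h01⟩
        · exact ⟨e₀, he⟩
      refine Or.inl ⟨e, f, i, j, hf, ?_, hi, Or.inr hj, hμ⟩
      rintro rfl
      simp [hi] at hj
    · exact Or.inr h
  rcases hcases' with ⟨e, f, i, j, hef, hij, hi, hj, hμ⟩ | ⟨ι, hι, hμ⟩
  · obtain ⟨s, hs, hμs⟩ := exists_sign_of_eq_or_eq_map_neg hμ
    have hμs' := map_mul_map_mul_of_mul_self_eq_one hs hμs
    let σ : Fin m → Equiv.Perm H := fun g => if g = e then Equiv.swap i j else 1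
    have hσe : σ e = Equiv.swap i j := if_pos rfl
    have hσ : ∀ g, g ≠ e → σ g = 1 := fun g hg => if_neg hg
    refine ⟨H, inferInstance, blk, id, fun g => σ g,
      fun g k => if g = e ∧ (k = i ∨ k = j) then s else 1,
      fun g => (σ g).injective, fun g k => ?_, fun g h _ => (σ g).surjective h,
      fun g k => ?_, fun g k => ?_, e, f, i, ?_, ?_, ?_⟩
    · dsimp only [id]
      by_cases hg : g = e
      · subst hg
        rw [hσe]
        rcases eq_or_ne k i with rfl | hki
        · simp [hi, hj]
        rcases eq_or_ne k j with rfl | hkj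
        · simp [hi, hj]
        rw [Equiv.swap_apply_of_ne_of_ne hki hkj]
      · rw [hσ g hg, Equiv.Perm.one_apply]
    · dsimp only
      split_ifs
      · exact hs
      · exact one_mul 1
    · dsimp only [id]
      by_cases hg : g = e
      · subst hg
        rw [hσe]
        rcases eq_or_ne k i with rfl | hki
        · simpa using hμs
        rcases eq_or_ne k j with rfl | hkj
        · simpa using hμs'
        rw [Equiv.swap_apply_of_ne_of_ne hki hkj]
        simp [hki, hkj]
      · simp [hσ g hg, hg]
    · simpa [hσe] using hj
    · simp [hσ f hef.symm, hi]
    · simpa [hσe, hσ f hef.symm] using hij.symm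
  · have hιinj : ∀ e f, ι e = ι f → e = f := fun e f h => by
      have := congrArg blk h
      rwa [hι, hι, Option.some_inj] at this
    have hsign : ∀ e, ∃ s : ℝ, s * s = 1 ∧ μ (ι e₀) = Measure.map (s * ·) (μ (ι e)) := by
      intro e
      apply exists_sign_of_eq_or_eq_map_neg
      by_cases he : e = e₀
      · exact Or.inl (by rw [he])
      · exact hμ e₀ e (Ne.symm he)
    choose s hs hμs using hsign
    let K := {h : H // ∀ e, e ≠ e₀ → h ≠ ι e}
    let σ : Fin m → K → H := fun e k => if k.1 = ι e₀ then ι e else k.1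
    let k₀ : K := ⟨ι e₀, fun e he h => he (hιinj _ _ h).symm⟩
    have hσ₀ : ∀ e, σ e k₀ = ι e := fun e => if_pos rfl
    have hσ : ∀ e (k : K), k.1 ≠ ι e₀ → σ e k = k.1 := fun e k hk => if_neg hk
    have hKι : ∀ e (k : K), k.1 ≠ ι e₀ → k.1 ≠ ι e := fun e k hk => by
      by_cases he : e = e₀
      · rwa [he]
      · exact k.2 e he
    have hk₀ : ∀ k : K, k.1 = ι e₀ → k = k₀ := fun k hk => Subtype.ext hk
    refine ⟨K, inferInstance, fun k => if k.1 = ι e₀ then none else blk k, Subtype.val, σ,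
      fun e k => if k.1 = ι e₀ then s e else 1, fun e k l hkl => ?_, fun e k => ?_,
      fun e h hh => ?_, fun e k => ?_, fun e k => ?_, e₀, e₁, k₀, ?_, ?_, ?_⟩
    · by_cases hk : k.1 = ι e₀ <;> by_cases hl : l.1 = ι e₀
      · exact Subtype.ext (hk.trans hl.symm)
      · rw [hk₀ k hk, hσ₀, hσ e l hl] at hkl
        exact absurd hkl.symm (hKι e l hl)
      · rw [hk₀ l hl, hσ₀, hσ e k hk] at hkl
        exact absurd hkl (hKι e k hk)
      · rw [hσ e k hk, hσ e l hl] at hkl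
        exact Subtype.ext hkl
    · by_cases hk : k.1 = ι e₀
      · obtain rfl := hk₀ k hk
        simp [k₀, hσ₀, hι]
      · simp only [hk, hσ e k hk, if_false]
    · by_cases hhe : h = ι e
      · exact ⟨k₀, by rw [hσ₀, hhe]⟩
      · have hne : ∀ f, h ≠ ι f := by
          rintro f rfl
          rw [hι] at hh
          rcases hh with hh | hh
          · simp at hh
          · exact hhe (by rw [Option.some_inj.1 hh])
        exact ⟨⟨h, fun f _ => hne f⟩, hσ e _ (hne e₀)⟩
    · dsimp only
      split_ifs
      · exact hs e
      · exact one_mul 1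
    · by_cases hk : k.1 = ι e₀
      · obtain rfl := hk₀ k hk
        simpa [hσ₀, k₀] using hμs e
      · simp [hk, hσ e k hk]
    · simp [hσ₀, hι]
    · simp [hσ₀, hι]
    · rw [hσ₀, hσ₀]
      exact fun h => h01 (hιinj _ _ h)
end
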